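/- The dense ('quantum Onsager') solution of the twisted reflection equation: the matrix-valued function K(u) = Σ_{1≤i≤N} E_{i,ī} + Σ_{1≤i<j≤N} ((1+q)/(q̃ + q u)) ( s^{j−i} u E_{i,j̄} + s^{i−j} q̃ E_{j,ī} ), where ī = N−i+1 and j̄ = N−j+1, satisfies the cross-conjugated twisted reflection equation (CtRE) for all u, v for which all factors are defined. -/

import Mathlib

/-!
The equation is checked entry by entry, and each entry involves only a bounded number of terms,
independently of `N`.

`R(z)` preserves the unordered pair of basis vectors, so it acts as a diagonal weight `diagW` plus
a weighted flip `flipW`, each depending only on `z` and on the relative order of the two indices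
(`RBJ_apply`). Partial transposition and conjugation by `C` turn the flips into maps
`e_{d̄} ⊗ e_d → e_{b̄} ⊗ e_b` weighted by `(-q)^{d-b}` (`Rvee_apply`). Hence, although `K(u)` is dense,
the entry of `K1(u) R^∨(uv) K2(v)` at row `(a, b)` and column `(c̄, d̄)` is a sum of just two terms,
`K_{a c̄} K_{b d̄}` and `K_{a b̄} K_{c d̄}` with weights (`left_apply`). The product
`K2(v) R^∨21(uv) K1(u)` is obtained from it by exchanging the tensor factors and the two spectral
parameters (`right_apply`).

Since `K_{a b̄} = s^{b-a} * gaugedK a b` and `s ^ 2 = -q`, all these terms carry the same power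
`s^{c+d-a-b}`, and the remaining factors depend only on the relative order of `a, b, c, d` and on
`q, u, v, s ^ N`. After clearing denominators there is one polynomial identity for each
weak ordering of `a, b, c, d` (`poly_identity`), and `ring1` verifies all of them.
-/

open Matrix
open scoped Kronecker

noncomputable section

/-- 1-based matrix unit `E_{a b}` in the `N × N` complex matrices. -/
def Em (N : ℕ) (a b : ℕ) : Matrix (Fin N) (Fin N) ℂ :=
  Matrix.of fun i j => if (i : ℕ) + 1 = a ∧ (j : ℕ) + 1 = b then 1 else 0

/-- The flip (permutation) operator `P = Σ_{i,j} E_{ij} ⊗ E_{ji}`. -/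
def Pmat (N : ℕ) : Matrix (Fin N × Fin N) (Fin N × Fin N) ℂ :=
  ∑ i ∈ Finset.Icc 1 N, ∑ j ∈ Finset.Icc 1 N, Em N i j ⊗ₖ Em N j i

/-- The constant R-matrix `R_q`. -/
def Rconst (N : ℕ) (q : ℂ) : Matrix (Fin N × Fin N) (Fin N × Fin N) ℂ :=
  (∑ i ∈ Finset.Icc 1 N, ∑ j ∈ Finset.Icc 1 N,
      (if i = j then q else 1) • (Em N i i ⊗ₖ Em N j j))
    + ∑ i ∈ Finset.Icc 1 N, ∑ j ∈ Finset.Icc 1 N,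
        (if i < j then q - q⁻¹ else 0) • (Em N i j ⊗ₖ Em N j i)

/-- `f_q(u) = 1/(q - q⁻¹ u)`. -/
def fBJ (q u : ℂ) : ℂ := (q - q⁻¹ * u)⁻¹

/-- The Bazhanov–Jimbo R-matrix `R(u) = f_q(u) R_q + f_{q⁻¹}(u⁻¹) P R_{q⁻¹} P`. -/
def RBJ (N : ℕ) (q u : ℂ) : Matrix (Fin N × Fin N) (Fin N × Fin N) ℂ :=
  fBJ q u • Rconst N q + fBJ q⁻¹ u⁻¹ • (Pmat N * Rconst N q⁻¹ * Pmat N)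

/-- `X1 = X ⊗ I`. -/
def M1 (N : ℕ) (X : Matrix (Fin N) (Fin N) ℂ) : Matrix (Fin N × Fin N) (Fin N × Fin N) ℂ :=
  X ⊗ₖ (1 : Matrix (Fin N) (Fin N) ℂ)

/-- `X2 = I ⊗ X`. -/
def M2 (N : ℕ) (X : Matrix (Fin N) (Fin N) ℂ) : Matrix (Fin N × Fin N) (Fin N × Fin N) ℂ :=
  (1 : Matrix (Fin N) (Fin N) ℂ) ⊗ₖ X

/-- `R21(u) = P R(u) P`. -/
def R21 (N : ℕ) (q u : ℂ) : Matrix (Fin N × Fin N) (Fin N × Fin N) ℂ :=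
  Pmat N * RBJ N q u * Pmat N

/-- Transposition in the first tensor factor. -/
def t1 (N : ℕ) (X : Matrix (Fin N × Fin N) (Fin N × Fin N) ℂ) :
    Matrix (Fin N × Fin N) (Fin N × Fin N) ℂ :=
  Matrix.of fun p r => X (r.1, p.2) (p.1, r.2)

/-- The charge conjugation matrix `C = Σ_i (-q)^i E_{ī i}` where `ī = N+1-i`. -/
def Cmat (N : ℕ) (q : ℂ) : Matrix (Fin N) (Fin N) ℂ :=
  ∑ i ∈ Finset.Icc 1 N, (-q) ^ i • Em N (N + 1 - i) i

/-- The C-conjugated R-matrix `R^∨(u) = C2⁻¹ R^{t1}(q̃² u⁻¹) C2` with `q̃ = s^N`. -/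
def Rvee (N : ℕ) (q s u : ℂ) : Matrix (Fin N × Fin N) (Fin N × Fin N) ℂ :=
  (M2 N (Cmat N q))⁻¹ * t1 N (RBJ N q ((s ^ N) ^ 2 * u⁻¹)) * M2 N (Cmat N q)

/-- `R^∨21(u) = P R^∨(u) P`. -/
def Rvee21 (N : ℕ) (q s u : ℂ) : Matrix (Fin N × Fin N) (Fin N × Fin N) ℂ :=
  Pmat N * Rvee N q s u * Pmat N

/-- The untwisted reflection equation at spectral parameters `(u, v)`. -/
def REeq (N : ℕ) (q : ℂ) (K : ℂ → Matrix (Fin N) (Fin N) ℂ) (u v : ℂ) : Prop :=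
  R21 N q (u / v) * M1 N (K u) * RBJ N q (u * v) * M2 N (K v)
    = M2 N (K v) * R21 N q (u * v) * M1 N (K u) * RBJ N q (u / v)

/-- `K` satisfies the untwisted reflection equation (RE) for all `u, v`
for which all factors are defined. -/
def IsRESol (N : ℕ) (q : ℂ) (K : ℂ → Matrix (Fin N) (Fin N) ℂ) : Prop :=
  ∀ u v : ℂ, u ≠ 0 → v ≠ 0 → u / v ≠ q ^ 2 → u / v ≠ q⁻¹ ^ 2 →
    u * v ≠ q ^ 2 → u * v ≠ q⁻¹ ^ 2 → REeq N q K u v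

/-- The cross-conjugated twisted reflection equation at `(u, v)`. -/
def CtREeq (N : ℕ) (q s : ℂ) (K : ℂ → Matrix (Fin N) (Fin N) ℂ) (u v : ℂ) : Prop :=
  R21 N q (u / v) * M1 N (K u) * Rvee N q s (u * v) * M2 N (K v)
    = M2 N (K v) * Rvee21 N q s (u * v) * M1 N (K u) * RBJ N q (u / v)

/-- `K` satisfies the cross-conjugated twisted reflection equation (CtRE) for all
`u, v` for which all factors are defined. -/
def IsCtRESol (N : ℕ) (q s : ℂ) (K : ℂ → Matrix (Fin N) (Fin N) ℂ) : Prop :=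
  ∀ u v : ℂ, u ≠ 0 → v ≠ 0 → u / v ≠ q ^ 2 → u / v ≠ q⁻¹ ^ 2 →
    (s ^ N) ^ 2 * (u * v)⁻¹ ≠ q ^ 2 → (s ^ N) ^ 2 * (u * v)⁻¹ ≠ q⁻¹ ^ 2 →
    CtREeq N q s K u v

/-- Transposition across the antidiagonal: `(M^w)_{ij} = M_{N+1-j, N+1-i}`. -/
def wT (N : ℕ) (M : Matrix (Fin N) (Fin N) ℂ) : Matrix (Fin N) (Fin N) ℂ :=
  Matrix.of fun i j => M (Fin.rev j) (Fin.rev i)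

/-- The dense ('quantum Onsager') K-matrix
`K(u) = Σ_i E_{i,ī} + Σ_{i<j} ((1+q)/(q̃+qu)) ( s^{j-i} u E_{i,j̄} + s^{i-j} q̃ E_{j,ī} )`,
where `ī = N+1-i` and `q̃ = s^N`. -/
def Kons (N : ℕ) (q s : ℂ) (u : ℂ) : Matrix (Fin N) (Fin N) ℂ :=
  (∑ i ∈ Finset.Icc 1 N, Em N i (N + 1 - i))
    + ∑ i ∈ Finset.Icc 1 N, ∑ j ∈ Finset.Icc 1 N,
        (if i < j then (1 + q) / (s ^ N + q * u) else 0) •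
          ((s ^ ((j : ℤ) - (i : ℤ)) * u) • Em N i (N + 1 - j)
            + (s ^ ((i : ℤ) - (j : ℤ)) * s ^ N) • Em N j (N + 1 - i))

/-! ### Entries of the R-matrices -/

theorem sum_Icc_eq_sum_fin {M : Type*} [AddCommMonoid M] (N : ℕ) (f : ℕ → M) :
    ∑ i ∈ Finset.Icc 1 N, f i = ∑ i : Fin N, f (i + 1) := by
  rw [Fin.sum_univ_eq_sum_range (fun i => f (i + 1)) N, Finset.range_eq_Ico,
    Finset.sum_Ico_add' f 0 N 1]
  rfl

theorem Em_apply (N : ℕ) (i j a b : Fin N) :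
    Em N (i + 1) (j + 1) a b = if i = a ∧ j = b then 1 else 0 := by
  simp [Em, Fin.ext_iff, eq_comm]

theorem bar_eq (N : ℕ) (i : Fin N) : N + 1 - ((i : ℕ) + 1) = (Fin.rev i : ℕ) + 1 := by
  rw [Fin.val_rev]; omega

theorem Pmat_apply (N : ℕ) (a b c d : Fin N) :
    Pmat N (a, b) (c, d) = if a = d ∧ b = c then 1 else 0 := by
  simp only [Pmat, sum_Icc_eq_sum_fin, Matrix.sum_apply, kroneckerMap_apply, Em_apply,
    ite_and, mul_ite, mul_one, mul_zero, Finset.sum_ite_eq', Finset.mem_univ, if_true]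
  split_ifs <;> simp_all

theorem Pmat_mul_apply (N : ℕ) (X : Matrix (Fin N × Fin N) (Fin N × Fin N) ℂ)
    (a b : Fin N) (r : Fin N × Fin N) : (Pmat N * X) (a, b) r = X (b, a) r := by
  rw [Matrix.mul_apply, Fintype.sum_prod_type, Finset.sum_eq_single b, Finset.sum_eq_single a]
  all_goals simp +contextual [Pmat_apply, eq_comm]

theorem mul_Pmat_apply (N : ℕ) (X : Matrix (Fin N × Fin N) (Fin N × Fin N) ℂ)
    (p : Fin N × Fin N) (c d : Fin N) : (X * Pmat N) p (c, d) = X p (d, c) := by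
  rw [Matrix.mul_apply, Fintype.sum_prod_type, Finset.sum_eq_single d, Finset.sum_eq_single c]
  all_goals simp +contextual [Pmat_apply, eq_comm]

theorem Rconst_apply (N : ℕ) (q : ℂ) (a b c d : Fin N) :
    Rconst N q (a, b) (c, d) =
      (if a = c ∧ b = d then (if a = b then q else 1) else 0)
        + (if a = d ∧ b = c then (if a < b then q - q⁻¹ else 0) else 0) := by
  simp only [Rconst, sum_Icc_eq_sum_fin, Matrix.add_apply, Matrix.sum_apply, Matrix.smul_apply,
    kroneckerMap_apply, Em_apply, ite_and, mul_ite, mul_one, mul_zero, smul_eq_mul,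
    Finset.sum_ite_eq', Finset.mem_univ, if_true,
    Finset.sum_ite_irrel, Finset.sum_const_zero, add_left_inj, Fin.val_inj, Fin.val_fin_lt,
    add_lt_add_iff_right]
  congr 1 <;> split_ifs <;> simp_all
  omega

/-- Weight of `e_a ⊗ e_b → e_a ⊗ e_b` in `R(z)`. -/
def diagW {N : ℕ} (q z : ℂ) (a b : Fin N) : ℂ :=
  if a = b then 1 else fBJ q z * (1 - z)

/-- Weight of `e_b ⊗ e_a → e_a ⊗ e_b`, `a ≠ b`, in `R(z)`; the case `a = b` is entirely accounted
for by `diagW`. -/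
def flipW {N : ℕ} (q z : ℂ) (a b : Fin N) : ℂ :=
  if a = b then 0 else fBJ q z * ((q - q⁻¹) * if a < b then 1 else z)

theorem fBJ_inv (q z : ℂ) (hq : q ≠ 0) (hz : z ≠ 0) (h : z ≠ q ^ 2) :
    fBJ q⁻¹ z⁻¹ = -z * fBJ q z := by
  have h' : q ^ 2 - z ≠ 0 := sub_ne_zero.2 h.symm
  have h'' : z - q ^ 2 ≠ 0 := sub_ne_zero.2 h
  have e1 : q - q⁻¹ * z = (q ^ 2 - z) / q := by field_simp
  have e2 : q⁻¹ - q⁻¹⁻¹ * z⁻¹ = (z - q ^ 2) / (q * z) := by field_simp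
  rw [fBJ, fBJ, e1, e2]
  field_simp
  ring

theorem RBJ_apply (N : ℕ) (q z : ℂ) (hq : q ≠ 0) (hz : z ≠ 0) (h : z ≠ q ^ 2)
    (a b c d : Fin N) :
    RBJ N q z (a, b) (c, d) =
      (if a = c ∧ b = d then diagW q z a b else 0)
        + (if a = d ∧ b = c then flipW q z a b else 0) := by
  have hf : fBJ q z * (q - q⁻¹ * z) = 1 := by
    apply inv_mul_cancel₀
    have h' : q ^ 2 - z ≠ 0 := sub_ne_zero.2 h.symm
    have e1 : q - q⁻¹ * z = (q ^ 2 - z) / q := by field_simp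
    rw [e1]; positivity
  rw [RBJ, Matrix.add_apply, Matrix.smul_apply, Matrix.smul_apply, mul_Pmat_apply,
    Pmat_mul_apply, Rconst_apply, Rconst_apply, fBJ_inv q z hq hz h, diagW, flipW]
  rcases lt_trichotomy a b with hab | hab | hab
  · have := hab.ne
    have := hab.ne'
    have := hab.not_gt
    simp only [*, if_true, if_false, smul_eq_mul, inv_inv, and_comm (a := b = d)]
    simp only [and_comm (a := b = c)]
    split_ifs <;> ring
  · subst hab
    simp only [lt_irrefl, if_true, if_false, smul_eq_mul, inv_inv, and_comm (a := a = d)]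
    split_ifs <;> first | ring1 | linear_combination hf
  · have := hab.ne
    have := hab.ne'
    have := hab.not_gt
    simp only [*, if_true, if_false, smul_eq_mul, inv_inv, and_comm (a := b = d)]
    simp only [and_comm (a := b = c)]
    split_ifs <;> ring

theorem R21_apply (N : ℕ) (q z : ℂ) (a b c d : Fin N) :
    R21 N q z (a, b) (c, d) = RBJ N q z (b, a) (d, c) := by
  rw [R21, mul_Pmat_apply, Pmat_mul_apply]

/-- `R(z)` and `R21(z)` have at most two nonzero entries per row and per column, so multiplying by
them on one side only mixes an entry with its flip. -/
theorem R21_mul_apply (N : ℕ) (q z : ℂ) (hq : q ≠ 0) (hz : z ≠ 0) (h : z ≠ q ^ 2)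
    (X : Matrix (Fin N × Fin N) (Fin N × Fin N) ℂ) (a b : Fin N) (r : Fin N × Fin N) :
    (R21 N q z * X) (a, b) r = diagW q z b a * X (a, b) r + flipW q z b a * X (b, a) r := by
  rw [Matrix.mul_apply, Fintype.sum_prod_type]
  simp only [R21_apply, RBJ_apply N q z hq hz h, add_mul, ite_mul, zero_mul, ite_and,
    Finset.sum_add_distrib, Finset.sum_ite_eq, Finset.mem_univ, if_true,
    Finset.sum_ite_irrel, Finset.sum_const_zero]

theorem mul_RBJ_apply (N : ℕ) (q z : ℂ) (hq : q ≠ 0) (hz : z ≠ 0) (h : z ≠ q ^ 2)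
    (X : Matrix (Fin N × Fin N) (Fin N × Fin N) ℂ) (p : Fin N × Fin N) (c d : Fin N) :
    (X * RBJ N q z) p (c, d) = diagW q z c d * X p (c, d) + flipW q z d c * X p (d, c) := by
  rw [Matrix.mul_apply, Fintype.sum_prod_type]
  simp only [RBJ_apply N q z hq hz h, mul_add, mul_ite, mul_zero, ite_and,
    Finset.sum_add_distrib, Finset.sum_ite_eq', Finset.mem_univ, if_true,
    Finset.sum_ite_irrel, Finset.sum_const_zero]
  ring

/-! ### The conjugated R-matrix and the K-matrix -/

theorem Cmat_apply (N : ℕ) (q : ℂ) (i j : Fin N) :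
    Cmat N q i j = if i = Fin.rev j then (-q) ^ ((j : ℕ) + 1) else 0 := by
  simp only [Cmat, sum_Icc_eq_sum_fin, Matrix.sum_apply, Matrix.smul_apply, bar_eq, Em_apply,
    smul_eq_mul, mul_ite, mul_one, mul_zero]
  rw [Finset.sum_eq_single j]
  · simp [eq_comm]
  · intro k _ hk; simp [hk]
  · simp

/-- The inverse of the charge conjugation matrix. -/
def CmatInv (N : ℕ) (q : ℂ) : Matrix (Fin N) (Fin N) ℂ :=
  Matrix.of fun i j => if j = Fin.rev i then ((-q) ^ ((i : ℕ) + 1))⁻¹ else 0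

theorem Cmat_mul_inv (N : ℕ) (q : ℂ) (hq : q ≠ 0) : Cmat N q * CmatInv N q = 1 := by
  have hq' : -q ≠ 0 := neg_ne_zero.2 hq
  ext i j
  rw [Matrix.mul_apply, Finset.sum_eq_single (Fin.rev i)]
  · by_cases hij : i = j
    · subst hij
      simp [Cmat_apply, CmatInv, hq']
    · simp [Cmat_apply, CmatInv, hij, Ne.symm hij]
  · intro k _ hk
    have : i ≠ Fin.rev k := fun h => hk (by rw [h, Fin.rev_rev])
    simp [Cmat_apply, this]
  · simp

theorem Rvee_eq (N : ℕ) (q s w : ℂ) (hq : q ≠ 0) :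
    Rvee N q s w = M2 N (CmatInv N q) * t1 N (RBJ N q ((s ^ N) ^ 2 * w⁻¹)) * M2 N (Cmat N q) := by
  rw [Rvee, Matrix.inv_eq_right_inv (B := M2 N (CmatInv N q))]
  rw [M2, M2, ← Matrix.mul_kronecker_mul, Cmat_mul_inv N q hq]
  simp

theorem M2_mul_apply (N : ℕ) (Y : Matrix (Fin N) (Fin N) ℂ)
    (X : Matrix (Fin N × Fin N) (Fin N × Fin N) ℂ) (a b : Fin N) (r : Fin N × Fin N) :
    (M2 N Y * X) (a, b) r = ∑ x, Y b x * X (a, x) r := by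
  simp only [Matrix.mul_apply, Fintype.sum_prod_type, M2, kroneckerMap_apply, Matrix.one_apply,
    ite_mul, one_mul, zero_mul, Finset.sum_ite_irrel, Finset.sum_const_zero, Finset.sum_ite_eq,
    Finset.mem_univ, if_true]

theorem mul_M2_apply (N : ℕ) (Y : Matrix (Fin N) (Fin N) ℂ)
    (X : Matrix (Fin N × Fin N) (Fin N × Fin N) ℂ) (p : Fin N × Fin N) (c d : Fin N) :
    (X * M2 N Y) p (c, d) = ∑ x, X p (c, x) * Y x d := by
  simp only [Matrix.mul_apply, Fintype.sum_prod_type, M2, kroneckerMap_apply, Matrix.one_apply,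
    ite_mul, one_mul, zero_mul, mul_ite, mul_zero, Finset.sum_ite_irrel, Finset.sum_const_zero,
    Finset.sum_ite_eq', Finset.mem_univ, if_true]

theorem M1_mul_apply (N : ℕ) (Y : Matrix (Fin N) (Fin N) ℂ)
    (X : Matrix (Fin N × Fin N) (Fin N × Fin N) ℂ) (a b : Fin N) (r : Fin N × Fin N) :
    (M1 N Y * X) (a, b) r = ∑ x, Y a x * X (x, b) r := by
  simp only [Matrix.mul_apply, Fintype.sum_prod_type, M1, kroneckerMap_apply, Matrix.one_apply,
    ite_mul, mul_ite, mul_one, mul_zero, zero_mul, Finset.sum_ite_eq, Finset.mem_univ, if_true]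

theorem mul_M1_apply (N : ℕ) (Y : Matrix (Fin N) (Fin N) ℂ)
    (X : Matrix (Fin N × Fin N) (Fin N × Fin N) ℂ) (p : Fin N × Fin N) (c d : Fin N) :
    (X * M1 N Y) p (c, d) = ∑ x, X p (x, d) * Y x c := by
  simp only [Matrix.mul_apply, Fintype.sum_prod_type, M1, kroneckerMap_apply, Matrix.one_apply,
    mul_ite, mul_one, mul_zero, Finset.sum_ite_eq', Finset.mem_univ, if_true]

/-- The conjugation by `C2` turns the off-diagonal entries of `R^{t1}` into maps
`e_{d̄} ⊗ e_d → e_{b̄} ⊗ e_b`, weighted by `(-q)^{d-b}`. -/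
theorem Rvee_apply (N : ℕ) (q s x w : ℂ) (hq : q ≠ 0) (hx : (s ^ N) ^ 2 * w⁻¹ = x)
    (hx0 : x ≠ 0) (h : x ≠ q ^ 2) (a b c d : Fin N) :
    Rvee N q s w (a, b) (c, d) =
      (if a = c ∧ b = d then diagW q x c (Fin.rev b) else 0)
        + (if a = Fin.rev b ∧ c = Fin.rev d then
            (-q) ^ ((d : ℤ) - (b : ℤ)) * flipW q x c (Fin.rev b) else 0) := by
  have hq' : -q ≠ 0 := neg_ne_zero.2 hq
  rw [Rvee_eq N q s w hq, hx, mul_M2_apply, Finset.sum_eq_single (Fin.rev d), M2_mul_apply,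
    Finset.sum_eq_single (Fin.rev b)]
  · simp only [CmatInv, Cmat_apply, t1, Matrix.of_apply, if_true, RBJ_apply N q x hq hx0 h,
      Fin.rev_inj]
    have e : ((-q) ^ ((b : ℕ) + 1))⁻¹ * (-q) ^ ((d : ℕ) + 1) = (-q) ^ ((d : ℤ) - (b : ℤ)) := by
      rw [zpow_sub₀ hq', zpow_natCast, zpow_natCast, pow_succ, pow_succ]
      field_simp
    have e' : b = d → (-q) ^ ((d : ℤ) - (b : ℤ)) = 1 := by rintro rfl; simp
    rw [mul_right_comm, e]
    simp only [eq_comm (a := a), and_comm (a := Fin.rev b = a)]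
    split_ifs <;> simp_all
  · intro k _ hk; simp [CmatInv, hk]
  · simp
  · intro k _ hk; simp [Cmat_apply, hk]
  · simp

/-- Entries of `K(u) J`, `J` the antidiagonal flip, in the gauge removing the powers of `s`. -/
def gaugedK {N : ℕ} (q Q u : ℂ) (a b : Fin N) : ℂ :=
  if a = b then 1 else (1 + q) / (Q + q * u) * if a < b then u else Q

theorem Kons_apply (N : ℕ) (q s u : ℂ) (a b : Fin N) :
    Kons N q s u a (Fin.rev b) = s ^ ((b : ℤ) - (a : ℤ)) * gaugedK q (s ^ N) u a b := by
  have key : Kons N q s u a (Fin.rev b) = (if a = b then 1 else 0)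
      + ((if a < b then (1 + q) / (s ^ N + q * u) else 0) * (s ^ ((b : ℤ) - (a : ℤ)) * u)
      + (if b < a then (1 + q) / (s ^ N + q * u) else 0) * (s ^ ((b : ℤ) - (a : ℤ)) * s ^ N)) := by
    simp only [Kons, sum_Icc_eq_sum_fin, Matrix.add_apply, Matrix.sum_apply, Matrix.smul_apply,
      bar_eq, Em_apply, smul_eq_mul, mul_add, Finset.sum_add_distrib, Fin.rev_inj,
      mul_ite, mul_one, mul_zero, ite_and, Finset.sum_ite_eq', Finset.mem_univ, if_true,
      Finset.sum_ite_irrel, Finset.sum_const_zero, Nat.cast_add, Nat.cast_one,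
      add_sub_add_right_eq_sub, add_lt_add_iff_right, Fin.val_fin_lt]
  rw [key, gaugedK]
  rcases lt_trichotomy a b with h | h | h
  · simp [h, h.ne, h.not_gt]; ring
  · simp [h]
  · simp [h, h.ne', h.not_gt]; ring

/-! ### The two sides of the reflection equation -/

theorem diagW_rev {N : ℕ} (q z : ℂ) (a b : Fin N) :
    diagW q z (Fin.rev a) (Fin.rev b) = diagW q z b a := by
  simp only [diagW, Fin.rev_inj, eq_comm (a := a)]

theorem flipW_rev {N : ℕ} (q z : ℂ) (a b : Fin N) :
    flipW q z (Fin.rev a) (Fin.rev b) = flipW q z b a := by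
  simp only [flipW, Fin.rev_inj, Fin.rev_lt_rev, eq_comm (a := a)]

/-- The sum over intermediate states in `K1(u) R^∨(uv) K2(v)` collapses to two terms. -/
theorem left_apply (N : ℕ) (q s x w u v : ℂ) (hq : q ≠ 0) (hs : s ^ 2 = -q)
    (hx : (s ^ N) ^ 2 * w⁻¹ = x) (hx0 : x ≠ 0) (h : x ≠ q ^ 2) (a b c d : Fin N) :
    (M1 N (Kons N q s u) * Rvee N q s w * M2 N (Kons N q s v)) (a, b) (Fin.rev c, Fin.rev d) =
      s ^ ((c : ℤ) + d - a - b) *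
        (diagW q x b c * (gaugedK q (s ^ N) u a c * gaugedK q (s ^ N) v b d)
          + flipW q x b c * (gaugedK q (s ^ N) u a b * gaugedK q (s ^ N) v c d)) := by
  have hs0 : s ≠ 0 := by rintro rfl; simp [eq_comm, hq] at hs
  have e1 : s ^ ((c : ℤ) + d - a - b) = s ^ ((c : ℤ) - a) * s ^ ((d : ℤ) - b) := by
    rw [← zpow_add₀ hs0]; congr 1; ring
  have e2 : s ^ ((c : ℤ) + d - a - b)
      = s ^ ((b : ℤ) - a) * (-q) ^ ((c : ℤ) - b) * s ^ ((d : ℤ) - c) := by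
    rw [← hs, ← zpow_natCast s 2, ← _root_.zpow_mul, ← zpow_add₀ hs0, ← zpow_add₀ hs0]
    congr 1; push_cast; ring
  have key : (M1 N (Kons N q s u) * Rvee N q s w * M2 N (Kons N q s v)) (a, b)
        (Fin.rev c, Fin.rev d) =
      Kons N q s u a (Fin.rev c) * diagW q x b c * Kons N q s v b (Fin.rev d)
        + Kons N q s u a (Fin.rev b) * ((-q) ^ ((c : ℤ) - b) * flipW q x b c)
          * Kons N q s v c (Fin.rev d) := by
    simp only [mul_M2_apply, M1_mul_apply, Rvee_apply N q s x w hq hx hx0 h, Fin.rev_inj,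
      diagW_rev, flipW_rev, mul_add, add_mul, Finset.sum_add_distrib, ite_and, mul_ite, ite_mul,
      mul_zero, zero_mul, Finset.sum_ite_eq, Finset.sum_ite_eq', Finset.mem_univ, if_true]
  rw [key, mul_add]
  simp only [Kons_apply]
  congr 1
  · rw [e1]; ring
  · rw [e2]; ring

theorem Rvee21_apply (N : ℕ) (q s w : ℂ) (a b c d : Fin N) :
    Rvee21 N q s w (a, b) (c, d) = Rvee N q s w (b, a) (d, c) := by
  rw [Rvee21, mul_Pmat_apply, Pmat_mul_apply]

/-- The sum over intermediate states in `K2(v) R^∨21(uv) K1(u)` collapses to two terms. -/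
theorem right_apply (N : ℕ) (q s x w u v : ℂ) (hq : q ≠ 0) (hs : s ^ 2 = -q)
    (hx : (s ^ N) ^ 2 * w⁻¹ = x) (hx0 : x ≠ 0) (h : x ≠ q ^ 2) (a b c d : Fin N) :
    (M2 N (Kons N q s v) * Rvee21 N q s w * M1 N (Kons N q s u)) (a, b) (Fin.rev c, Fin.rev d) =
      s ^ ((c : ℤ) + d - a - b) *
        (diagW q x a d * (gaugedK q (s ^ N) u a c * gaugedK q (s ^ N) v b d)
          + flipW q x a d * (gaugedK q (s ^ N) v b a * gaugedK q (s ^ N) u d c)) := by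
  -- Exchanging the two tensor factors turns this product into the one of `left_apply`.
  have key : (M2 N (Kons N q s v) * Rvee21 N q s w * M1 N (Kons N q s u)) (a, b)
        (Fin.rev c, Fin.rev d) =
      (M1 N (Kons N q s v) * Rvee N q s w * M2 N (Kons N q s u)) (b, a)
        (Fin.rev d, Fin.rev c) := by
    simp only [mul_M1_apply, M2_mul_apply, mul_M2_apply, M1_mul_apply, Rvee21_apply]
  rw [key, left_apply N q s x w v u hq hs hx hx0 h]
  congr 1
  · congr 1; ring
  · ring

/-! ### Reduction to polynomial identities -/

/-- `diagW` cleared of denominators, in homogeneous variables: `z = x / y`. -/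
def diagPoly {N : ℕ} (q x y : ℂ) (a b : Fin N) : ℂ :=
  if a = b then q ^ 2 * y - x else q * (y - x)

/-- `flipW` cleared of denominators, in homogeneous variables: `z = x / y`. -/
def flipPoly {N : ℕ} (q x y : ℂ) (a b : Fin N) : ℂ :=
  if a = b then 0 else (q ^ 2 - 1) * if a < b then y else x

/-- `gaugedK` cleared of denominators. -/
def gaugedKPoly {N : ℕ} (q Q u : ℂ) (a b : Fin N) : ℂ :=
  if a = b then Q + q * u else (1 + q) * if a < b then u else Q

theorem fBJ_div (q x y : ℂ) (hq : q ≠ 0) (hy : y ≠ 0) :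
    fBJ q (x / y) = q * y / (q ^ 2 * y - x) := by
  have e : q - q⁻¹ * (x / y) = (q ^ 2 * y - x) / (q * y) := by field_simp
  rw [fBJ, e, inv_div]

theorem diagW_div {N : ℕ} (q x y : ℂ) (hq : q ≠ 0) (hy : y ≠ 0) (h : q ^ 2 * y - x ≠ 0)
    (a b : Fin N) : diagW q (x / y) a b = diagPoly q x y a b / (q ^ 2 * y - x) := by
  rw [diagW, diagPoly, fBJ_div q x y hq hy]
  split_ifs <;> field_simp

theorem flipW_div {N : ℕ} (q x y : ℂ) (hq : q ≠ 0) (hy : y ≠ 0) (h : q ^ 2 * y - x ≠ 0)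
    (a b : Fin N) : flipW q (x / y) a b = flipPoly q x y a b / (q ^ 2 * y - x) := by
  rw [flipW, flipPoly, fBJ_div q x y hq hy]
  split_ifs
  · rw [zero_div]
  all_goals field_simp

theorem gaugedK_div {N : ℕ} (q Q u : ℂ) (h : Q + q * u ≠ 0) (a b : Fin N) :
    gaugedK q Q u a b = gaugedKPoly q Q u a b / (Q + q * u) := by
  rw [gaugedK, gaugedKPoly]
  split_ifs <;> field_simp

/-- Trichotomy in a form suited to evaluating conditionals. -/
theorem order_cases {N : ℕ} (x y : Fin N) :
    (x < y ∧ (x = y) = False ∧ (y = x) = False ∧ (x < y) = True ∧ (y < x) = False) ∨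
    (x = y ∧ (x = y) = True ∧ (y = x) = True ∧ (x < y) = False ∧ (y < x) = False) ∨
    (y < x ∧ (x = y) = False ∧ (y = x) = False ∧ (x < y) = False ∧ (y < x) = True) := by
  rcases lt_trichotomy x y with h | h | h
  · simp [h, h.ne, h.ne', h.not_gt]
  · simp [h]
  · simp [h, h.ne, h.ne', h.not_gt]

set_option maxHeartbeats 4000000 in
/-- The reflection equation for the gauged entries. Every weight depends only on the relative
order of its two indices, so each weak ordering of `a, b, c, d` gives one polynomial identity. -/
theorem poly_identity {N : ℕ} (q Q u v : ℂ) (a b c d : Fin N) :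
    diagPoly q u v b a *
        (diagPoly q (Q ^ 2) (u * v) b c * (gaugedKPoly q Q u a c * gaugedKPoly q Q v b d)
          + flipPoly q (Q ^ 2) (u * v) b c * (gaugedKPoly q Q u a b * gaugedKPoly q Q v c d))
      + flipPoly q u v b a *
        (diagPoly q (Q ^ 2) (u * v) a c * (gaugedKPoly q Q u b c * gaugedKPoly q Q v a d)
          + flipPoly q (Q ^ 2) (u * v) a c * (gaugedKPoly q Q u b a * gaugedKPoly q Q v c d))
    = diagPoly q u v d c *
        (diagPoly q (Q ^ 2) (u * v) a d * (gaugedKPoly q Q u a c * gaugedKPoly q Q v b d)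
          + flipPoly q (Q ^ 2) (u * v) a d * (gaugedKPoly q Q v b a * gaugedKPoly q Q u d c))
      + flipPoly q u v c d *
        (diagPoly q (Q ^ 2) (u * v) a c * (gaugedKPoly q Q u a d * gaugedKPoly q Q v b c)
          + flipPoly q (Q ^ 2) (u * v) a c * (gaugedKPoly q Q v b a * gaugedKPoly q Q u c d)) := by
  unfold diagPoly flipPoly gaugedKPoly
  rcases order_cases a b with
    ⟨hab, eab1, eab2, eab3, eab4⟩ | ⟨hab, eab1, eab2, eab3, eab4⟩ |
    ⟨hab, eab1, eab2, eab3, eab4⟩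
  all_goals rcases order_cases b c with
    ⟨hbc, ebc1, -, ebc3, -⟩ | ⟨hbc, ebc1, -, ebc3, -⟩ |
    ⟨hbc, ebc1, -, ebc3, -⟩
  all_goals rcases order_cases a c with
    ⟨hac, eac1, -, eac3, -⟩ | ⟨hac, eac1, -, eac3, -⟩ |
    ⟨hac, eac1, -, eac3, -⟩
  all_goals try (exfalso; omega)
  all_goals rcases order_cases c d with
    ⟨hcd, ecd1, ecd2, ecd3, ecd4⟩ | ⟨hcd, ecd1, ecd2, ecd3, ecd4⟩ |
    ⟨hcd, ecd1, ecd2, ecd3, ecd4⟩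
  all_goals rcases order_cases b d with
    ⟨hbd, ebd1, -, ebd3, -⟩ | ⟨hbd, ebd1, -, ebd3, -⟩ |
    ⟨hbd, ebd1, -, ebd3, -⟩
  all_goals try (exfalso; omega)
  all_goals rcases order_cases a d with
    ⟨had, ead1, -, ead3, -⟩ | ⟨had, ead1, -, ead3, -⟩ |
    ⟨had, ead1, -, ead3, -⟩
  all_goals try (exfalso; omega)
  all_goals
    simp only [eab1, eab2, eab3, eab4, ebc1, ebc3,
      eac1, eac3, ecd1, ecd2, ecd3, ecd4,
      ebd1, ebd3, ead1, ead3,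
      if_true, if_false]
    ring1

/-- the dense ('quantum Onsager') solution satisfies the
cross-conjugated twisted reflection equation (CtRE) for all `u, v` for which all
factors are defined. -/
theorem statement15 (N : ℕ) (hN : 2 ≤ N) (q s : ℂ) (hq : q ≠ 0) (hs : s ^ 2 = -q)
    (u v : ℂ) (hu : u ≠ 0) (hv : v ≠ 0)
    (h1 : u / v ≠ q ^ 2) (h2 : u / v ≠ q⁻¹ ^ 2)
    (h3 : (s ^ N) ^ 2 * (u * v)⁻¹ ≠ q ^ 2) (h4 : (s ^ N) ^ 2 * (u * v)⁻¹ ≠ q⁻¹ ^ 2)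
    (hKu : s ^ N + q * u ≠ 0) (hKv : s ^ N + q * v ≠ 0) :
    CtREeq N q s (Kons N q s) u v := by
  have hs0 : s ≠ 0 := by rintro rfl; simp [eq_comm, hq] at hs
  have hQ : s ^ N ≠ 0 := pow_ne_zero _ hs0
  have huv : u * v ≠ 0 := mul_ne_zero hu hv
  have hz : q ^ 2 * v - u ≠ 0 := fun h => h1 (by rw [div_eq_iff hv]; linear_combination -h)
  have hw : q ^ 2 * (u * v) - (s ^ N) ^ 2 ≠ 0 := fun h =>
    h3 (by rw [← div_eq_mul_inv, div_eq_iff huv]; linear_combination -h)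
  have hx : (s ^ N) ^ 2 * (u * v)⁻¹ = (s ^ N) ^ 2 / (u * v) := (div_eq_mul_inv _ _).symm
  have hx0 : (s ^ N) ^ 2 / (u * v) ≠ 0 := div_ne_zero (pow_ne_zero _ hQ) huv
  have hz0 : u / v ≠ 0 := div_ne_zero hu hv
  rw [hx] at h3
  rw [CtREeq]
  ext ⟨a, b⟩ ⟨c, d⟩
  obtain ⟨c, rfl⟩ := Fin.rev_surjective c
  obtain ⟨d, rfl⟩ := Fin.rev_surjective d
  rw [mul_RBJ_apply N q _ hq hz0 h1, Matrix.mul_assoc, Matrix.mul_assoc,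
    R21_mul_apply N q _ hq hz0 h1, ← Matrix.mul_assoc,
    left_apply N q s _ _ u v hq hs hx hx0 h3, left_apply N q s _ _ u v hq hs hx hx0 h3,
    right_apply N q s _ _ u v hq hs hx hx0 h3, right_apply N q s _ _ u v hq hs hx hx0 h3,
    diagW_rev, flipW_rev]
  have e1 : s ^ ((c : ℤ) + d - b - a) = s ^ ((c : ℤ) + d - a - b) := by congr 1; ring
  have e2 : s ^ ((d : ℤ) + c - a - b) = s ^ ((c : ℤ) + d - a - b) := by congr 1; ring
  rw [e1, e2]
  simp only [diagW_div q _ _ hq hv hz, flipW_div q _ _ hq hv hz, diagW_div q _ _ hq huv hw,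
    flipW_div q _ _ hq huv hw, gaugedK_div q _ _ hKu, gaugedK_div q _ _ hKv]
  linear_combination s ^ ((c : ℤ) + d - a - b) * (q ^ 2 * v - u)⁻¹
    * (q ^ 2 * (u * v) - (s ^ N) ^ 2)⁻¹ * (s ^ N + q * u)⁻¹ * (s ^ N + q * v)⁻¹
    * poly_identity q (s ^ N) u v a b c d

end
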